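/- arXiv:1705.03810 — 2 statements merged into one kernel-verified Lean document; each statement's English description precedes it below -/
import Mathlib

section
/- There exist absolute constants c₀, c₁, c₂ > 0 such that the following holds. Let N, m be positive integers, ρ > 0, and 1 ≤ p < ∞. Let T = {x ∈ ℝ^N : ‖x‖_{ℓ2} = 1 and ‖x‖_{ℓ1} ≤ ρ⁻¹}, and let w(T) = E[sup_{x∈T}⟨g, x⟩], where g is a standard Gaussian vector in ℝ^N (i.i.d. N(0,1) coordinates). If m ≥ c₀·w(T)², then a random m × N matrix Φ whose entries are i.i.d. N(0,1) satisfies the (p, ρ, c₁·m^{1/p})-robust width property over B_{ℓ1} with probability at least 1 − 2e^{−c₂ m}. -/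
open MeasureTheory ProbabilityTheory Finset

/-- The ℓp norm of a vector in ℝ^m, for real `p`. -/
noncomputable def lpNorm {m : ℕ} (p : ℝ) (u : Fin m → ℝ) : ℝ :=
  (∑ i, |u i| ^ p) ^ (1 / p)

/-- The ℓ1 norm of a vector in ℝ^N. -/
noncomputable def l1Norm {N : ℕ} (v : Fin N → ℝ) : ℝ :=
  ∑ j, |v j|

/-- The ℓ2 norm of a vector in ℝ^N. -/
noncomputable def l2Norm {N : ℕ} (v : Fin N → ℝ) : ℝ :=
  Real.sqrt (∑ j, (v j) ^ 2)

/-- The law of a standard Gaussian vector in ℝ^N (i.i.d. N(0,1) coordinates). -/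
noncomputable def stdGaussianVec (N : ℕ) : Measure (Fin N → ℝ) :=
  Measure.pi fun _ => gaussianReal 0 1

/-- The law of an m × N standard Gaussian matrix (i.i.d. N(0,1) entries). -/
noncomputable def stdGaussianMatrix (m N : ℕ) : Measure (Fin m → Fin N → ℝ) :=
  Measure.pi fun _ => stdGaussianVec N

/-- The Gaussian width of a set T ⊆ ℝ^N. -/
noncomputable def gaussianWidth {N : ℕ} (T : Set (Fin N → ℝ)) : ℝ :=
  ∫ g, sSup ((fun x : Fin N → ℝ => ∑ j, g j * x j) '' T) ∂(stdGaussianVec N)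

open scoped NNReal ENNReal

noncomputable def ip {N : ℕ} (g x : Fin N → ℝ) : ℝ := ∑ j, g j * x j

noncomputable def gam (N : ℕ) (v : ℝ≥0) : Measure (Fin N → ℝ) :=
  Measure.pi fun _ => gaussianReal 0 v

instance (N : ℕ) (v : ℝ≥0) : IsProbabilityMeasure (gam N v) := by
  unfold gam; infer_instance

noncomputable def psi (u : ℝ) : ℝ := min |u| 1

lemma psi_nonneg (u : ℝ) : 0 ≤ psi u := le_min (abs_nonneg _) zero_le_one
lemma psi_le_one (u : ℝ) : psi u ≤ 1 := min_le_right _ _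
lemma psi_le_abs (u : ℝ) : psi u ≤ |u| := min_le_left _ _
lemma psi_cont : Continuous psi := by unfold psi; fun_prop

lemma psi_lip (u v : ℝ) : psi u - psi v ≤ |u - v| := by
  unfold psi
  have h1 := abs_sub_abs_le_abs_sub u v
  have h2 := abs_nonneg (u - v)
  rcases min_cases |u| (1:ℝ) with h | h <;> rcases min_cases |v| (1:ℝ) with h' | h' <;> linarith

noncomputable def cpsi : ℝ := ∫ u, psi u ∂(gaussianReal 0 1)

lemma psi_integrable {Ω : Type*} [MeasurableSpace Ω] (μ : Measure Ω) [IsFiniteMeasure μ]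
    (f : Ω → ℝ) (hf : Measurable f) : Integrable (fun ω => psi (f ω)) μ := by
  refine Integrable.of_bound (C := 1) (psi_cont.measurable.comp hf).aestronglyMeasurable ?_
  filter_upwards with ω
  rw [Real.norm_eq_abs, abs_of_nonneg (psi_nonneg _)]
  exact psi_le_one _

lemma cpsi_pos : 0 < cpsi := by
  unfold cpsi
  rw [integral_pos_iff_support_of_nonneg (fun u => psi_nonneg u) (psi_integrable _ id measurable_id)]
  have : Function.support psi = {0}ᶜ := by
    ext u
    simp only [Function.mem_support, Set.mem_compl_iff, Set.mem_singleton_iff, ne_eq]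
    refine not_congr ⟨fun h => ?_, fun h => by simp [psi, h]⟩
    unfold psi at h
    rcases min_cases |u| (1:ℝ) with h' | h'
    · rw [h'.1] at h; exact abs_eq_zero.1 h
    · rw [h'.1] at h; norm_num at h
  rw [this]
  have := nullSingletonClass_gaussianReal (μ := 0) (v := 1) one_ne_zero
  rw [prob_compl_eq_one_sub (measurableSet_singleton _)]
  simp

@[fun_prop]
lemma ip_cont {N : ℕ} (x : Fin N → ℝ) : Continuous (fun g => ip g x) := by
  unfold ip; fun_prop

@[fun_prop]
lemma ip_meas {N : ℕ} (x : Fin N → ℝ) : Measurable (fun g => ip g x) := (ip_cont x).measurable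

@[fun_prop]
lemma psi_meas : Measurable psi := psi_cont.measurable

lemma ip_integrable {N : ℕ} (v : ℝ≥0) (x : Fin N → ℝ) : Integrable (fun g => ip g x) (gam N v) := by
  unfold ip
  refine integrable_finsetSum _ fun j _ => Integrable.mul_const ?_ _
  unfold gam
  exact integrable_eval (μ := fun _ : Fin N => gaussianReal 0 v) IsGaussian.integrable_id

lemma ip_add {N : ℕ} (g h x : Fin N → ℝ) : ip (g + h) x = ip g x + ip h x := by
  simp [ip, add_mul, Finset.sum_add_distrib]

lemma gam_conv (N : ℕ) (v w : ℝ≥0) :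
    ((gam N v).prod (gam N w)).map (fun p => p.1 + p.2) = gam N (v + w) := by
  unfold gam
  rw [← (measurePreserving_arrowProdEquivProdArrow ℝ ℝ (Fin N) (fun _ => gaussianReal 0 v)
    (fun _ => gaussianReal 0 w)).map_eq, Measure.map_map (by fun_prop) (by fun_prop)]
  have h : ((gaussianReal 0 v).prod (gaussianReal 0 w)).map (fun p => p.1 + p.2)
      = gaussianReal 0 (v + w) := by
    have := gaussianReal_conv_gaussianReal (m₁ := 0) (m₂ := 0) (v₁ := v) (v₂ := w)
    rw [add_zero] at this
    exact this
  have h2 := Measure.pi_map_pi (ι := Fin N)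
    (μ := fun _ => (gaussianReal 0 v).prod (gaussianReal 0 w)) (f := fun _ p => p.1 + p.2)
    (fun _ => by fun_prop)
  simp only [h] at h2
  rw [← h2]
  rfl

lemma gam_scale (N : ℕ) (v : ℝ≥0) :
    (gam N 1).map (fun g => (Real.sqrt v) • g) = gam N v := by
  unfold gam
  have h : (gaussianReal 0 1).map (fun u => Real.sqrt v * u) = gaussianReal 0 v := by
    rw [gaussianReal_map_const_mul]
    congr 1
    · simp
    · ext; simp
  have h2 := Measure.pi_map_pi (ι := Fin N)
    (μ := fun _ => gaussianReal 0 1) (f := fun _ p => Real.sqrt v * p)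
    (fun _ => by fun_prop)
  simp only [h] at h2
  rw [← h2]
  rfl

lemma gam_neg (N : ℕ) (v : ℝ≥0) : (gam N v).map (fun g => -g) = gam N v := by
  unfold gam
  have h : (gaussianReal 0 v).map (fun u => -u) = gaussianReal 0 v := by
    rw [gaussianReal_map_neg, neg_zero]
  have h2 := Measure.pi_map_pi (ι := Fin N)
    (μ := fun _ => gaussianReal 0 v) (f := fun _ p => -p)
    (fun _ => by fun_prop)
  simp only [h] at h2
  conv_rhs => rw [← h2]
  rfl

lemma ip_law {N : ℕ} (x : Fin N → ℝ) (hx : ∑ j, x j ^ 2 = 1) :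
    (gam N 1).map (fun g => ip g x) = gaussianReal 0 1 := by
  let L : StrongDual ℝ (EuclideanSpace ℝ (Fin N)) := innerSL ℝ (WithLp.toLp 2 x)
  have h1 : (gam N 1).map (fun g => ip g x) = (stdGaussian (EuclideanSpace ℝ (Fin N))).map L := by
    rw [← map_pi_eq_stdGaussian, Measure.map_map (by fun_prop) (by fun_prop)]
    unfold gam
    congr 1
  rw [h1, IsGaussian.map_eq_gaussianReal, integral_strongDual_stdGaussian, variance_dual_stdGaussian]
  congr 1
  have : ‖L‖ ^ 2 = 1 := by
    simp [L, EuclideanSpace.norm_sq_eq, hx]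
  rw [this]; simp

lemma psi_mean {N : ℕ} (x : Fin N → ℝ) (hx : ∑ j, x j ^ 2 = 1) :
    ∫ g, psi (ip g x) ∂(gam N 1) = cpsi := by
  unfold cpsi
  rw [← ip_law x hx, integral_map (by fun_prop) psi_cont.aestronglyMeasurable]

section fin
variable {N : ℕ} {D : Finset (Fin N → ℝ)} (hD : D.Nonempty)

lemma sup_integrable {Ω : Type*} [MeasurableSpace Ω] {μ : Measure Ω}
    {f : (Fin N → ℝ) → Ω → ℝ} (hf : ∀ x ∈ D, Integrable (f x) μ) :
    Integrable (fun ω => D.sup' hD (fun x => f x ω)) μ := by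
  have : (fun ω => D.sup' hD (fun x => f x ω)) = D.sup' hD f := by
    ext ω; rw [Finset.sup'_apply]
  rw [this]
  exact Finset.sup'_induction hD f (p := fun f => Integrable f μ) (fun a ha b hb => ha.sup hb) hf

lemma sup_meas {Ω : Type*} [MeasurableSpace Ω]
    {f : (Fin N → ℝ) → Ω → ℝ} (hf : ∀ x ∈ D, Measurable (f x)) :
    Measurable (fun ω => D.sup' hD (fun x => f x ω)) := by
  have : (fun ω => D.sup' hD (fun x => f x ω)) = D.sup' hD f := by
    ext ω; rw [Finset.sup'_apply]
  rw [this]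
  exact Finset.sup'_induction hD f (p := fun f => Measurable f) (fun a ha b hb => ha.sup hb) hf

lemma step1 (hunit : ∀ x ∈ D, ∑ j, x j ^ 2 = 1) (b : (Fin N → ℝ) → ℝ) :
    ∫ φ, D.sup' hD (fun x => b x + (cpsi - psi (ip φ x))) ∂(gam N 1) ≤
      ∫ φ, D.sup' hD (fun x => b x + 2 * ip φ x) ∂(gam N 1) := by
  have iψ : ∀ x, Integrable (fun φ => psi (ip φ x)) (gam N 1) :=
    fun x => psi_integrable _ _ (by fun_prop)
  have iA : Integrable (fun φ => D.sup' hD (fun x => b x + (cpsi - psi (ip φ x)))) (gam N 1) :=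
    sup_integrable hD fun x _ => (integrable_const _).add ((integrable_const _).sub (iψ x))
  have iP : Integrable (fun φ => D.sup' hD (fun x => b x + 2 * psi (ip φ x))) (gam N 1) :=
    sup_integrable hD fun x _ => (integrable_const _).add ((iψ x).const_mul 2)
  have iM : Integrable (fun φ => D.sup' hD (fun x => b x - 2 * psi (ip φ x))) (gam N 1) :=
    sup_integrable hD fun x _ => (integrable_const _).sub ((iψ x).const_mul 2)
  have jP : Integrable (fun φ => D.sup' hD (fun x => b x + 2 * ip φ x)) (gam N 1) :=
    sup_integrable hD fun x _ => (integrable_const _).add ((ip_integrable 1 x).const_mul 2)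
  have jM : Integrable (fun φ => D.sup' hD (fun x => b x - 2 * ip φ x)) (gam N 1) :=
    sup_integrable hD fun x _ => (integrable_const _).sub ((ip_integrable 1 x).const_mul 2)
  -- symmetric
  have hsym : ∫ φ, D.sup' hD (fun x => b x - 2 * ip φ x) ∂(gam N 1) =
      ∫ φ, D.sup' hD (fun x => b x + 2 * ip φ x) ∂(gam N 1) := by
    conv_rhs => rw [← gam_neg N 1]
    rw [integral_map (by fun_prop)
      (sup_meas hD fun x _ => by fun_prop).aestronglyMeasurable]
    simp [ip, sub_eq_add_neg]
  have hJ : D.sup' hD (fun x => b x + 2 * cpsi) ≤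
      ∫ φ, D.sup' hD (fun x => b x + 2 * psi (ip φ x)) ∂(gam N 1) := by
    refine Finset.sup'_le _ _ fun x hx => ?_
    have : b x + 2 * cpsi = ∫ φ, (b x + 2 * psi (ip φ x)) ∂(gam N 1) := by
      rw [integral_add (integrable_const _) ((iψ x).const_mul 2), integral_const_mul,
        psi_mean x (hunit x hx)]
      simp
    rw [this]
    exact integral_mono ((integrable_const _).add ((iψ x).const_mul 2)) iP
      fun φ => Finset.le_sup' (fun x => b x + 2 * psi (ip φ x)) hx
  have h1 : ∫ φ, D.sup' hD (fun x => b x + (cpsi - psi (ip φ x))) ∂(gam N 1) ≤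
      ∫ φ, (1/2 * D.sup' hD (fun x => b x + 2 * cpsi)
        + 1/2 * D.sup' hD (fun x => b x - 2 * psi (ip φ x))) ∂(gam N 1) := by
    refine integral_mono iA ((integrable_const _).add (iM.const_mul _)) fun φ => ?_
    refine Finset.sup'_le _ _ fun x hx => ?_
    have h1 := Finset.le_sup' (fun x => b x + 2 * cpsi) hx
    have h2 := Finset.le_sup' (fun x => b x - 2 * psi (ip φ x)) hx
    dsimp only at h1 h2 ⊢
    linarith
  rw [integral_add (integrable_const _) (iM.const_mul _)] at h1
  simp only [integral_const, probReal_univ, one_smul] at h1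
  rw [integral_const_mul] at h1
  have h2 : ∫ φ, (D.sup' hD (fun x => b x + 2 * psi (ip φ x))
        + D.sup' hD (fun x => b x - 2 * psi (ip φ x))) ∂(gam N 1) ≤
      ∫ φ, (D.sup' hD (fun x => b x + 2 * ip φ x)
        + D.sup' hD (fun x => b x - 2 * ip φ x)) ∂(gam N 1) := by
    refine integral_mono (iP.add iM) (jP.add jM) fun φ => ?_
    obtain ⟨x, hx, hx'⟩ := Finset.exists_mem_eq_sup' hD (fun x => b x + 2 * psi (ip φ x))
    obtain ⟨y, hy, hy'⟩ := Finset.exists_mem_eq_sup' hD (fun x => b x - 2 * psi (ip φ x))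
    have a1 := Finset.le_sup' (fun x => b x + 2 * ip φ x) hx
    have a2 := Finset.le_sup' (fun x => b x + 2 * ip φ x) hy
    have a3 := Finset.le_sup' (fun x => b x - 2 * ip φ x) hx
    have a4 := Finset.le_sup' (fun x => b x - 2 * ip φ x) hy
    have a5 := psi_lip (ip φ x) (ip φ y)
    dsimp only at *
    rw [hx', hy']
    rcases abs_cases (ip φ x - ip φ y) with h | h <;> linarith
  rw [integral_add iP iM, integral_add jP jM, hsym] at h2
  linarith

noncomputable def W (v : ℝ≥0) (a : (Fin N → ℝ) → ℝ) : ℝ :=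
  ∫ g, D.sup' hD (fun x => a x + 2 * ip g x) ∂(gam N v)

lemma W_int (v : ℝ≥0) (a : (Fin N → ℝ) → ℝ) :
    Integrable (fun g => D.sup' hD (fun x => a x + 2 * ip g x)) (gam N v) :=
  sup_integrable hD fun x _ => (integrable_const _).add ((ip_integrable v x).const_mul 2)

lemma step2 (hunit : ∀ x ∈ D, ∑ j, x j ^ 2 = 1) (v : ℝ≥0) (a : (Fin N → ℝ) → ℝ) :
    ∫ φ, W hD v (fun x => a x + (cpsi - psi (ip φ x))) ∂(gam N 1) ≤ W hD (v + 1) a := by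
  unfold W
  have i1 : Integrable (fun p : (Fin N → ℝ) × (Fin N → ℝ) =>
      D.sup' hD (fun x => a x + (cpsi - psi (ip p.1 x)) + 2 * ip p.2 x))
      ((gam N 1).prod (gam N v)) := by
    refine sup_integrable hD fun x _ => ?_
    refine ((integrable_const _).add ((integrable_const _).sub ?_)).add (Integrable.const_mul ?_ _)
    · exact psi_integrable _ _ (by fun_prop)
    · exact (ip_integrable v x).comp_snd _
  have i2 : Integrable (fun p : (Fin N → ℝ) × (Fin N → ℝ) =>
      D.sup' hD (fun x => (a x + 2 * ip p.1 x) + 2 * ip p.2 x))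
      ((gam N v).prod (gam N 1)) := by
    refine sup_integrable hD fun x _ => ?_
    refine ((integrable_const _).add (Integrable.const_mul ?_ _)).add (Integrable.const_mul ?_ _)
    · exact (ip_integrable v x).comp_fst _
    · exact (ip_integrable 1 x).comp_snd _
  rw [integral_integral_swap (f := fun φ g =>
    D.sup' hD (fun x => a x + (cpsi - psi (ip φ x)) + 2 * ip g x)) i1]
  have e : ∫ g, D.sup' hD (fun x => a x + 2 * ip g x) ∂(gam N (v + 1)) =
      ∫ g, ∫ φ, D.sup' hD (fun x => (a x + 2 * ip g x) + 2 * ip φ x) ∂(gam N 1) ∂(gam N v) := by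
    rw [← gam_conv N v 1, integral_map (by fun_prop)
      (sup_meas hD fun x _ => by fun_prop).aestronglyMeasurable, integral_integral i2]
    simp only [ip_add, mul_add, add_assoc]
  rw [e]
  refine integral_mono i1.integral_prod_right i2.integral_prod_left fun g => ?_
  have := step1 hD hunit (fun x => a x + 2 * ip g x)
  refine le_trans (le_of_eq ?_) this
  congr 1; ext φ; congr 1; ext x; ring

lemma W_bounds (v : ℝ≥0) (a q : (Fin N → ℝ) → ℝ) (h0 : ∀ x, 0 ≤ q x) (h1 : ∀ x, q x ≤ 1) :
    W hD v (fun x => a x + (cpsi - q x)) ∈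
      Set.Icc (W hD v (fun x => a x + cpsi) - 1) (W hD v (fun x => a x + cpsi)) := by
  constructor
  · have : W hD v (fun x => a x + cpsi) - 1 =
        ∫ g, (D.sup' hD (fun x => a x + cpsi + 2 * ip g x) - 1) ∂(gam N v) := by
      rw [integral_sub (W_int hD v _) (integrable_const _)]; simp [W]
    rw [this]
    refine integral_mono ((W_int hD v _).sub (integrable_const _)) (W_int hD v _) fun g => ?_
    rw [sub_le_iff_le_add]
    refine Finset.sup'_le _ _ fun x hx => ?_
    have := Finset.le_sup' (fun x => a x + (cpsi - q x) + 2 * ip g x) hx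
    linarith [h1 x]
  · refine integral_mono (W_int hD v _) (W_int hD v _) fun g => ?_
    refine Finset.sup'_le _ _ fun x hx => ?_
    have := Finset.le_sup' (fun x => a x + cpsi + 2 * ip g x) hx
    dsimp only at this ⊢
    linarith [h0 x]

lemma main_mgf (hunit : ∀ x ∈ D, ∑ j, x j ^ 2 = 1) (l : ℝ) (hl : 0 ≤ l) (m : ℕ) :
    ∀ a : (Fin N → ℝ) → ℝ,
    ∫⁻ Φ : Fin m → Fin N → ℝ,
      ENNReal.ofReal (Real.exp (l * D.sup' hD (fun x => a x + ∑ i, (cpsi - psi (ip (Φ i) x)))))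
        ∂(Measure.pi fun _ => gam N 1)
      ≤ ENNReal.ofReal (Real.exp (l * W hD m a + m * l ^ 2 / 8)) := by
  induction m with
  | zero =>
    intro a
    have : gam N 0 = Measure.dirac 0 := by
      rw [← gam_scale N 0]
      simp [Measure.map_const]
    simp [W, this, ip]
  | succ m ih =>
    intro a
    have hmeas : Measurable (fun p : (Fin N → ℝ) × (Fin m → Fin N → ℝ) =>
        ENNReal.ofReal (Real.exp (l * D.sup' hD
          (fun x => (a x + (cpsi - psi (ip p.1 x))) + ∑ i, (cpsi - psi (ip (p.2 i) x)))))) := by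
      refine ENNReal.measurable_ofReal.comp (Real.measurable_exp.comp (Measurable.const_mul ?_ _))
      exact sup_meas hD fun x _ => by fun_prop
    have e1 : ∫⁻ Φ : Fin (m+1) → Fin N → ℝ,
        ENNReal.ofReal (Real.exp (l * D.sup' hD (fun x => a x + ∑ i, (cpsi - psi (ip (Φ i) x)))))
          ∂(Measure.pi fun _ => gam N 1) =
        ∫⁻ φ, ∫⁻ Φ : Fin m → Fin N → ℝ, ENNReal.ofReal (Real.exp (l * D.sup' hD
          (fun x => (a x + (cpsi - psi (ip φ x))) + ∑ i, (cpsi - psi (ip (Φ i) x)))))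
          ∂(Measure.pi fun _ => gam N 1) ∂(gam N 1) := by
      rw [← lintegral_prod _ hmeas.aemeasurable,
        ← (measurePreserving_piFinSuccAbove (fun _ : Fin (m+1) => gam N 1) 0).lintegral_comp hmeas]
      refine lintegral_congr fun Φ => ?_
      simp only [Fin.sum_univ_succ, ← add_assoc]
      rfl
    rw [e1]
    set V : (Fin N → ℝ) → ℝ := fun φ => W hD m (fun x => a x + (cpsi - psi (ip φ x))) with hV
    have hVm : Measurable V := by
      refine StronglyMeasurable.measurable ?_
      refine StronglyMeasurable.integral_prod_right' (f := fun (p : (Fin N → ℝ) × (Fin N → ℝ)) =>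
        D.sup' hD (fun x => a x + (cpsi - psi (ip p.1 x)) + 2 * ip p.2 x)) ?_
      exact (sup_meas hD fun x _ => by fun_prop).stronglyMeasurable
    have hVb : ∀ φ, V φ ∈ Set.Icc (W hD m (fun x => a x + cpsi) - 1) (W hD m (fun x => a x + cpsi)) :=
      fun φ => W_bounds hD m a _ (fun x => psi_nonneg _) (fun x => psi_le_one _)
    have hS := hasSubgaussianMGF_of_mem_Icc (μ := gam N 1) hVm.aemeasurable
      (Filter.Eventually.of_forall hVb)
    have hle := hS.mgf_le l
    have hin := hS.integrable_exp_mul l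
    have hEV := step2 hD hunit m a
    calc _ ≤ ∫⁻ φ, ENNReal.ofReal (Real.exp (l * V φ + m * l ^ 2 / 8)) ∂(gam N 1) :=
          lintegral_mono fun φ => ih _
      _ = ∫⁻ φ, ENNReal.ofReal (Real.exp (l * (∫ φ, V φ ∂(gam N 1)) + m * l ^ 2 / 8) *
            Real.exp (l * (V φ - ∫ φ, V φ ∂(gam N 1)))) ∂(gam N 1) := by
          refine lintegral_congr fun φ => ?_
          rw [← Real.exp_add]; congr 2; ring
      _ = ENNReal.ofReal (Real.exp (l * (∫ φ, V φ ∂(gam N 1)) + m * l ^ 2 / 8) *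
            mgf (fun φ => V φ - ∫ φ, V φ ∂(gam N 1)) (gam N 1) l) := by
          rw [← ofReal_integral_eq_lintegral_ofReal (hin.const_mul _)
            (Filter.Eventually.of_forall fun φ => by positivity), integral_const_mul]
          rfl
      _ ≤ _ := by
          refine ENNReal.ofReal_le_ofReal ?_
          refine (mul_le_mul_of_nonneg_left hle (Real.exp_nonneg _)).trans ?_
          rw [← Real.exp_add]
          refine Real.exp_le_exp.2 ?_
          have : l * (∫ φ, V φ ∂(gam N 1)) ≤ l * W hD (m + 1) a := mul_le_mul_of_nonneg_left hEV hl
          push_cast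
          simp
          linarith

end fin

lemma power_mean {m : ℕ} (hm : 0 < m) (p : ℝ) (hp : 1 ≤ p) (u : Fin m → ℝ) (A : ℝ) (hA : 0 ≤ A)
    (h : A * m ≤ ∑ i, |u i|) : A * (m : ℝ) ^ (1 / p) ≤ lpNorm p u := by
  have hm' : (0:ℝ) < m := by exact_mod_cast hm
  have hp0 : 0 < p := by linarith
  have h1 := Real.rpow_sum_le_const_mul_sum_rpow Finset.univ u hp
  rw [Finset.card_univ, Fintype.card_fin] at h1
  have h2 : (A * m) ^ p ≤ (m:ℝ) ^ (p - 1) * ∑ i, |u i| ^ p :=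
    (Real.rpow_le_rpow (by positivity) h hp0.le).trans h1
  have h3 : A ^ p * m ≤ ∑ i, |u i| ^ p := by
    rw [Real.mul_rpow hA hm'.le] at h2
    have e : (m:ℝ) ^ p = (m:ℝ) ^ (p - 1) * m := by
      rw [← Real.rpow_add_one hm'.ne']; congr 1; ring
    rw [e] at h2
    have hpos : 0 < (m:ℝ) ^ (p - 1) := Real.rpow_pos_of_pos hm' _
    refine le_of_mul_le_mul_left ?_ hpos
    linarith
  unfold _root_.lpNorm
  calc A * (m : ℝ) ^ (1 / p) = (A ^ p * m) ^ (1 / p) := by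
        rw [Real.mul_rpow (by positivity) hm'.le, ← Real.rpow_mul hA, mul_one_div_cancel hp0.ne',
          Real.rpow_one]
    _ ≤ _ := Real.rpow_le_rpow (by positivity) h3 (by positivity)

lemma W_zero {N : ℕ} {D : Finset (Fin N → ℝ)} (hD : D.Nonempty) (m : ℕ) :
    W hD m (fun _ => 0) = 2 * Real.sqrt m * ∫ g, D.sup' hD (fun x => ip g x) ∂(gam N 1) := by
  unfold W
  rw [← gam_scale, integral_map (by fun_prop) (sup_meas hD fun x _ => by fun_prop).aestronglyMeasurable,
    ← integral_const_mul]
  congr 1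
  ext g
  have hs : 0 ≤ 2 * Real.sqrt m := by positivity
  have e : ∀ x, 0 + 2 * ip (Real.sqrt ((m : ℝ≥0) : ℝ) • g) x = (2 * Real.sqrt m) * ip g x := by
    intro x
    simp only [ip, Pi.smul_apply, smul_eq_mul, Finset.mul_sum, zero_add, NNReal.coe_natCast]
    exact Finset.sum_congr rfl fun j _ => by ring
  simp only [e]
  exact (Finset.mul₀_sup' hs _ D hD).symm

lemma tail {N : ℕ} {D : Finset (Fin N → ℝ)} (hD : D.Nonempty)
    (hunit : ∀ x ∈ D, ∑ j, x j ^ 2 = 1) (m : ℕ) (w : ℝ)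
    (hw : ∫ g, D.sup' hD (fun x => ip g x) ∂(gam N 1) ≤ w) (hmw : 64 / cpsi ^ 2 * w ^ 2 ≤ m) :
    (Measure.pi fun _ : Fin m => gam N 1)
      {Φ | ∃ x ∈ D, ∑ i, |ip (Φ i) x| < cpsi / 2 * m} ≤
      ENNReal.ofReal (Real.exp (-(cpsi ^ 2 / 8 * m))) := by
  have hc := cpsi_pos
  have hmeas : Measurable (fun Φ : Fin m → Fin N → ℝ =>
      ENNReal.ofReal (Real.exp (cpsi * D.sup' hD (fun x => 0 + ∑ i, (cpsi - psi (ip (Φ i) x)))))) := by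
    refine ENNReal.measurable_ofReal.comp (Real.measurable_exp.comp (Measurable.const_mul ?_ _))
    exact sup_meas hD fun x _ => by fun_prop
  have hM := main_mgf hD hunit cpsi hc.le m (fun _ => 0)
  have hsub : {Φ : Fin m → Fin N → ℝ | ∃ x ∈ D, ∑ i, |ip (Φ i) x| < cpsi / 2 * m} ⊆
      {Φ | ENNReal.ofReal (Real.exp (cpsi * (cpsi / 2 * m))) ≤
        ENNReal.ofReal (Real.exp (cpsi * D.sup' hD (fun x => 0 + ∑ i, (cpsi - psi (ip (Φ i) x)))))} := by
    rintro Φ ⟨x, hx, h⟩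
    refine ENNReal.ofReal_le_ofReal (Real.exp_le_exp.2 (mul_le_mul_of_nonneg_left ?_ hc.le))
    have h1 := Finset.le_sup' (fun x => 0 + ∑ i, (cpsi - psi (ip (Φ i) x))) hx
    have h2 : ∑ i, psi (ip (Φ i) x) ≤ ∑ i, |ip (Φ i) x| := Finset.sum_le_sum fun i _ => psi_le_abs _
    simp only [Finset.sum_sub_distrib, Finset.sum_const, Finset.card_univ, Fintype.card_fin,
      nsmul_eq_mul, zero_add] at h1 ⊢
    linarith
  refine (measure_mono hsub).trans ((meas_ge_le_lintegral_div hmeas.aemeasurable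
    (by simp [Real.exp_pos]) ENNReal.ofReal_ne_top).trans ?_)
  refine (ENNReal.div_le_div_right hM _).trans ?_
  rw [← ENNReal.ofReal_div_of_pos (Real.exp_pos _), ← Real.exp_sub]
  refine ENNReal.ofReal_le_ofReal (Real.exp_le_exp.2 ?_)
  have hsq : Real.sqrt m ^ 2 = m := Real.sq_sqrt (Nat.cast_nonneg m)
  have hs0 := Real.sqrt_nonneg (m:ℝ)
  have hw8 : 8 * w ≤ cpsi * Real.sqrt m := by
    refine le_of_abs_le (abs_le_of_sq_le_sq ?_ (by positivity))
    rw [mul_pow, mul_pow, hsq]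
    have e : 64 / cpsi ^ 2 * w ^ 2 * cpsi ^ 2 = 64 * w ^ 2 := by field_simp
    have := mul_le_mul_of_nonneg_right hmw (sq_nonneg cpsi)
    rw [e] at this
    linarith
  rw [W_zero]
  have h1 : 2 * Real.sqrt m * ∫ g, D.sup' hD (fun x => ip g x) ∂(gam N 1) ≤ cpsi * m / 4 := by
    calc _ ≤ 2 * Real.sqrt m * (cpsi * Real.sqrt m / 8) :=
          mul_le_mul_of_nonneg_left (by linarith) (by positivity)
      _ = cpsi * (Real.sqrt m ^ 2) / 4 := by ring
      _ = _ := by rw [hsq]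
  have h2 := mul_le_mul_of_nonneg_left h1 hc.le
  nlinarith

lemma width_mono {N : ℕ} (T : Set (Fin N → ℝ)) (hT : ∀ x ∈ T, ∑ j, x j ^ 2 = 1)
    {D : Finset (Fin N → ℝ)} (hD : D.Nonempty) (hDT : ∀ x ∈ D, x ∈ T) :
    ∫ g, D.sup' hD (fun x => ip g x) ∂(gam N 1) ≤ gaussianWidth T := by
  have hB : ∀ g : Fin N → ℝ, ∀ x ∈ T, |ip g x| ≤ ∑ j, |g j| := by
    intro g x hx
    refine (Finset.abs_sum_le_sum_abs _ _).trans (Finset.sum_le_sum fun j _ => ?_)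
    rw [abs_mul]
    refine mul_le_of_le_one_right (abs_nonneg _) ?_
    rw [← sq_le_one_iff_abs_le_one, ← hT x hx]
    exact Finset.single_le_sum (f := fun j => x j ^ 2) (fun i _ => sq_nonneg _) (Finset.mem_univ j)
  have hbdd : ∀ g : Fin N → ℝ, BddAbove ((fun x => ip g x) '' T) := by
    rintro g
    refine ⟨∑ j, |g j|, ?_⟩
    rintro _ ⟨x, hx, rfl⟩
    exact (le_abs_self _).trans (hB g x hx)
  have hmeas : Measurable (fun g : Fin N → ℝ => sSup ((fun x => ip g x) '' T)) := by
    simp_rw [sSup_image']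
    refine LowerSemicontinuous.measurable (lowerSemicontinuous_ciSup (fun g => ?_) fun x => ?_)
    · have := hbdd g
      rwa [Set.image_eq_range] at this
    · exact (ip_cont x.1).lowerSemicontinuous
  obtain ⟨x₀, hx₀⟩ := hD
  have hint : Integrable (fun g : Fin N → ℝ => sSup ((fun x => ip g x) '' T)) (gam N 1) := by
    have hbi : Integrable (fun g : Fin N → ℝ => ∑ j, |g j|) (gam N 1) := by
      refine integrable_finsetSum _ fun j _ => Integrable.abs ?_
      unfold gam
      exact integrable_eval (μ := fun _ : Fin N => gaussianReal 0 1) IsGaussian.integrable_id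
    refine hbi.mono' hmeas.aestronglyMeasurable (Filter.Eventually.of_forall fun g => ?_)
    rw [Real.norm_eq_abs, abs_le]
    constructor
    · exact (neg_le_of_abs_le (hB g x₀ (hDT _ hx₀))).trans
        (le_csSup (hbdd g) ⟨x₀, hDT _ hx₀, rfl⟩)
    · refine csSup_le ⟨_, x₀, hDT _ hx₀, rfl⟩ ?_
      rintro _ ⟨x, hx, rfl⟩
      exact (le_abs_self _).trans (hB g x hx)
  refine integral_mono (sup_integrable _ fun x _ => ip_integrable 1 x) hint fun g => ?_
  refine Finset.sup'_le _ _ fun x hx => ?_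
  exact le_csSup (hbdd g) ⟨x, hDT _ hx, rfl⟩

lemma bad_bound {N m : ℕ} (T : Set (Fin N → ℝ)) (hT : ∀ x ∈ T, ∑ j, x j ^ 2 = 1)
    (hmw : 64 / cpsi ^ 2 * gaussianWidth T ^ 2 ≤ m) :
    ∃ B : Set (Fin m → Fin N → ℝ), MeasurableSet B ∧
      {Φ | ∃ x ∈ T, ∑ i, |ip (Φ i) x| < cpsi / 2 * m} ⊆ B ∧
      (Measure.pi fun _ : Fin m => gam N 1) B ≤ ENNReal.ofReal (Real.exp (-(cpsi ^ 2 / 8 * m))) := by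
  rcases T.eq_empty_or_nonempty with rfl | hne
  · exact ⟨∅, MeasurableSet.empty, by simp, by simp⟩
  obtain ⟨s, hsT, hsc, hTs⟩ :=
    (TopologicalSpace.IsSeparable.of_separableSpace T).exists_countable_dense_subset
  have hsne : s.Nonempty := by
    rw [← closure_nonempty_iff]; exact hne.mono hTs
  obtain ⟨e, rfl⟩ := hsc.exists_eq_range hsne
  classical
  let D : ℕ → Finset (Fin N → ℝ) := fun n => (Finset.range (n+1)).image e
  have hDT : ∀ n, ∀ x ∈ D n, x ∈ T := by
    intro n x hx
    obtain ⟨k, _, rfl⟩ := Finset.mem_image.1 hx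
    exact hsT ⟨k, rfl⟩
  have hDne : ∀ n, (D n).Nonempty := fun n => ⟨e 0, Finset.mem_image.2 ⟨0, by simp, rfl⟩⟩
  let B : ℕ → Set (Fin m → Fin N → ℝ) := fun n =>
    {Φ | ∃ x ∈ D n, ∑ i, |ip (Φ i) x| < cpsi / 2 * m}
  have hmono : Monotone B := by
    intro n k hnk Φ
    rintro ⟨x, hx, h⟩
    refine ⟨x, ?_, h⟩
    exact Finset.image_subset_image (Finset.range_mono (by omega)) hx
  refine ⟨⋃ n, B n, MeasurableSet.iUnion fun n => ?_, ?_, ?_⟩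
  · have : B n = ⋃ x ∈ D n, {Φ | ∑ i, |ip (Φ i) x| < cpsi / 2 * m} := by
      ext Φ; simp [B]
    rw [this]
    refine Finset.measurableSet_biUnion _ fun x _ => measurableSet_lt ?_ measurable_const
    fun_prop
  · rintro Φ ⟨x, hx, h⟩
    have ho : IsOpen {y : Fin N → ℝ | ∑ i, |ip (Φ i) y| < cpsi / 2 * m} := by
      refine isOpen_lt ?_ continuous_const
      unfold ip; fun_prop
    obtain ⟨y, hy, k, rfl⟩ := mem_closure_iff.1 (hTs hx) _ ho h
    exact Set.mem_iUnion.2 ⟨k, e k, Finset.mem_image.2 ⟨k, by simp, rfl⟩, hy⟩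
  · rw [hmono.measure_iUnion]
    exact iSup_le fun n => tail (hDne n) (fun x hx => hT x (hDT n x hx)) m _
      (width_mono T hT (hDne n) (hDT n)) hmw

/-- Theorem 4: there are absolute constants c₀, c₁, c₂ > 0 such that if
m ≥ c₀ w(T)² with T = ρ⁻¹B_{ℓ1} ∩ S^{N−1}, then an m × N standard Gaussian matrix
satisfies the (p, ρ, c₁ m^{1/p})-robust width property over B_{ℓ1} with probability
at least 1 − 2e^{−c₂ m}. -/
theorem gaussian_rwp :
    ∃ c₀ c₁ c₂ : ℝ, 0 < c₀ ∧ 0 < c₁ ∧ 0 < c₂ ∧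
      ∀ (N m : ℕ), 0 < N → 0 < m → ∀ ρ : ℝ, 0 < ρ → ∀ p : ℝ, 1 ≤ p →
        c₀ * (gaussianWidth {x : Fin N → ℝ | l2Norm x = 1 ∧ l1Norm x ≤ ρ⁻¹}) ^ 2 ≤ m →
        ENNReal.ofReal (1 - 2 * Real.exp (-(c₂ * m))) ≤
          stdGaussianMatrix m N
            {Φ : Fin m → Fin N → ℝ | ∀ x : Fin N → ℝ,
              lpNorm p (fun i => ∑ j, Φ i j * x j) < c₁ * (m : ℝ) ^ (1 / p) * l2Norm x →
              l2Norm x ≤ ρ * l1Norm x} := by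
  have hc := cpsi_pos
  refine ⟨64 / cpsi ^ 2, cpsi / 2, cpsi ^ 2 / 8, by positivity, by positivity, by positivity, ?_⟩
  intro N m hN hm ρ hρ p hp hmw
  have hT : ∀ x ∈ {x : Fin N → ℝ | l2Norm x = 1 ∧ l1Norm x ≤ ρ⁻¹}, ∑ j, x j ^ 2 = 1 := by
    rintro x ⟨hx, _⟩
    exact Real.sqrt_eq_one.1 hx
  obtain ⟨B, hBm, hB, hPB⟩ := bad_bound _ hT hmw
  have hμ : stdGaussianMatrix m N = Measure.pi fun _ : Fin m => gam N 1 := rfl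
  rw [hμ]
  refine le_trans ?_ (measure_mono (s := Bᶜ) ?_)
  · rw [prob_compl_eq_one_sub hBm, ENNReal.ofReal_sub _ (by positivity), ENNReal.ofReal_one]
    refine tsub_le_tsub_left (hPB.trans (ENNReal.ofReal_le_ofReal ?_)) _
    linarith [Real.exp_pos (-(cpsi ^ 2 / 8 * m))]
  · intro Φ hΦ x hx
    by_contra hcon
    push Not at hcon
    refine hΦ (hB ?_)
    have hl1 : 0 ≤ l1Norm x := Finset.sum_nonneg fun j _ => abs_nonneg _
    have hl2 : 0 < l2Norm x := lt_of_le_of_lt (by positivity) hcon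
    have hsum : ∑ i, |ip (Φ i) x| < cpsi / 2 * l2Norm x * m := by
      by_contra hge
      push Not at hge
      have := power_mean hm p hp (fun i => ip (Φ i) x) (cpsi / 2 * l2Norm x) (by positivity) hge
      have e : (fun i => ip (Φ i) x) = fun i => ∑ j, Φ i j * x j := rfl
      rw [e] at this
      linarith
    refine ⟨fun j => (l2Norm x)⁻¹ * x j, ⟨?_, ?_⟩, ?_⟩
    · unfold l2Norm at hl2 ⊢
      simp only [mul_pow, ← Finset.mul_sum]
      rw [Real.sqrt_mul (by positivity), Real.sqrt_sq (by positivity)]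
      exact inv_mul_cancel₀ hl2.ne'
    · have : l1Norm (fun j => (l2Norm x)⁻¹ * x j) = (l2Norm x)⁻¹ * l1Norm x := by
        simp only [l1Norm, abs_mul, ← Finset.mul_sum]
        rw [abs_of_pos (inv_pos.2 hl2)]
      rw [this, inv_mul_le_iff₀ hl2, ← div_eq_mul_inv, le_div_iff₀ hρ, mul_comm]
      exact hcon.le
    · have : ∀ i, |ip (Φ i) (fun j => (l2Norm x)⁻¹ * x j)| = (l2Norm x)⁻¹ * |ip (Φ i) x| := by
        intro i
        rw [← abs_of_pos (inv_pos.2 hl2), ← abs_mul, abs_of_pos (inv_pos.2 hl2)]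
        congr 1
        simp only [ip, Finset.mul_sum]
        exact Finset.sum_congr rfl fun j _ => by ring
      simp only [this, ← Finset.mul_sum]
      rw [inv_mul_lt_iff₀ hl2]
      linarith
end

section
/- Fix 1 ≤ p < ∞ and 0 < η < 1. There exist constants C, D, C′, D′ > 0 (depending only on p) such that for all positive integers s ≤ N and m with m ≥ C·s·log(eN/s) + D·log(2η⁻¹), a random m × N matrix Φ with i.i.d. N(0,1) entries satisfies, with probability at least 1 − η, the following: for every x♮ ∈ ℝ^N, every ε ≥ 0, and every e ∈ ℝ^m with ‖e‖_{ℓp} ≤ ε, setting y = Φx♮ + e, every x⋆ ∈ ℝ^N that is a minimizer of ‖x‖_{ℓ1} subject to ‖Φx − y‖_{ℓp} ≤ ε (i.e., ‖Φx⋆ − y‖_{ℓp} ≤ ε and ‖x⋆‖_{ℓ1} ≤ ‖x‖_{ℓ1} for every x with ‖Φx − y‖_{ℓp} ≤ ε) satisfies ‖x⋆ − x♮‖_{ℓ2} ≤ (C′/√s)·σ_s(x♮)₁ + (D′/m^{1/p})·ε. -/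
open MeasureTheory ProbabilityTheory Finset

/-- The best s-term ℓ1-approximation error σ_s(x)₁. -/
noncomputable def bestApproxL1 {N : ℕ} (s : ℕ) (x : Fin N → ℝ) : ℝ :=
  ⨅ z : {z : Fin N → ℝ // {j | z j ≠ 0}.ncard ≤ s}, l1Norm (x - (z : Fin N → ℝ))

instance (N : ℕ) : IsProbabilityMeasure (stdGaussianVec N) := by
  unfold stdGaussianVec; infer_instance

instance (m N : ℕ) : IsProbabilityMeasure (stdGaussianMatrix m N) := by
  unfold stdGaussianMatrix; infer_instance

lemma chernoff_pi {α : Type*} [MeasurableSpace α] (μ : Measure α) [IsProbabilityMeasure μ]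
    (h : α → ℝ) (hi : Integrable (fun x => Real.exp (h x)) μ) (m : ℕ) (t : ℝ) :
    (Measure.pi fun _ : Fin m => μ) {x | t ≤ ∑ i, h (x i)} ≤
      ENNReal.ofReal (Real.exp (-t) * (∫ x, Real.exp (h x) ∂μ) ^ m) := by
  have hint : Integrable (fun x : Fin m → α => ∏ i, Real.exp (h (x i)))
      (Measure.pi fun _ : Fin m => μ) :=
    Integrable.fintype_prod (f := fun _ x => Real.exp (h x)) (fun _ => hi)
  have hM := mul_meas_ge_le_integral_of_nonneg
    (Filter.Eventually.of_forall (fun x => Finset.prod_nonneg (fun i _ => (Real.exp_pos (h (x i))).le)))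
    hint (Real.exp t)
  rw [integral_fintype_prod_eq_pow (fun x => Real.exp (h x)), Fintype.card_fin] at hM
  have hset : {x : Fin m → α | t ≤ ∑ i, h (x i)} =
      {x | Real.exp t ≤ ∏ i, Real.exp (h (x i))} := by
    ext x
    simp only [Set.mem_ofPred_eq]
    rw [← Real.exp_sum, Real.exp_le_exp]
  rw [hset, ← ofReal_measureReal]
  apply ENNReal.ofReal_le_ofReal
  rw [Real.exp_neg, inv_mul_eq_div, le_div_iff₀ (Real.exp_pos t), mul_comm]
  exact hM

lemma law_unit {N : ℕ} (u : Fin N → ℝ) (hu : ∑ j, u j ^ 2 = 1) :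
    (stdGaussianVec N).map (fun g => ∑ j, g j * u j) = gaussianReal 0 1 := by
  have hind : iIndepFun (fun (j : Fin N) (g : Fin N → ℝ) => g j * u j) (stdGaussianVec N) :=
    iIndepFun_pi (μ := fun _ : Fin N => gaussianReal 0 1) (X := fun j x => x * u j)
      (fun j => by fun_prop)
  have hg1 : ∀ j, HasGaussianLaw (fun (x : ℝ) => x * u j) (gaussianReal 0 1) := by
    intro j
    constructor
    rw [gaussianReal_map_mul_const]
    infer_instance
  have hgl : ∀ j, HasGaussianLaw (fun (g : Fin N → ℝ) => g j * u j) (stdGaussianVec N) := by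
    intro j
    constructor
    have h1 : (stdGaussianVec N).map (fun g => g j) = gaussianReal 0 1 :=
      (measurePreserving_eval (fun _ : Fin N => gaussianReal 0 1) j).map_eq
    have h2 : (fun (g : Fin N → ℝ) => g j * u j) = (fun x => x * u j) ∘ (fun g => g j) := rfl
    rw [h2, ← Measure.map_map (by fun_prop) (by fun_prop), h1, gaussianReal_map_mul_const]
    infer_instance
  have hs := hind.hasGaussianLaw_fun_sum hgl
  rw [hs.map_eq_gaussianReal]
  have hmean : ∫ g, ∑ j, g j * u j ∂(stdGaussianVec N) = 0 := by
    rw [integral_finsetSum _ (fun j _ => (hgl j).integrable)]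
    apply Finset.sum_eq_zero
    intro j _
    rw [integral_mul_const]
    have : ∫ g : Fin N → ℝ, g j ∂(stdGaussianVec N) = 0 := by
      have := (measurePreserving_eval (fun _ : Fin N => gaussianReal 0 1) j).map_eq
      have h3 := integral_map (μ := stdGaussianVec N) (φ := fun g => g j)
        (measurable_pi_apply j).aemeasurable
        (f := fun x : ℝ => x) (by fun_prop)
      rw [← h3]
      unfold stdGaussianVec
      change ∫ y, y ∂(Measure.map (Function.eval j) (Measure.pi fun _ : Fin N => gaussianReal 0 1)) = 0
      rw [this]; simp
    rw [this, zero_mul]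
  have hvar : Var[fun g => ∑ j, g j * u j; stdGaussianVec N] = 1 := by
    have := variance_sum_pi (μ := fun _ : Fin N => gaussianReal 0 1) (X := fun j x => x * u j)
      (fun j => (hg1 j).memLp_two)
    have h4 : (∑ j, fun (g : Fin N → ℝ) => g j * u j) = fun g => ∑ j, g j * u j := by
      ext g; simp
    rw [h4] at this
    unfold stdGaussianVec
    rw [this, ← hu]
    apply Finset.sum_congr rfl
    intro j _
    rw [variance_mul_const]
    simp [variance_fun_id_gaussianReal]
  rw [hmean, hvar]; simp

lemma rho_lt_one : ∫ x, Real.exp (-|x|) ∂(gaussianReal 0 1) < 1 := by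
  have hi : Integrable (fun x : ℝ => Real.exp (-|x|)) (gaussianReal 0 1) := by
    apply Integrable.mono' (integrable_const (1:ℝ)) (by fun_prop)
    exact Filter.Eventually.of_forall (fun x => by
      rw [Real.norm_eq_abs, abs_of_pos (Real.exp_pos _)]; simp)
  have hpos : 0 < ∫ x, (1 - Real.exp (-|x|)) ∂(gaussianReal 0 1) := by
    have hnn : (0 : ℝ → ℝ) ≤ fun x => 1 - Real.exp (-|x|) := fun x => by simp
    have hii : Integrable (fun x : ℝ => 1 - Real.exp (-|x|)) (gaussianReal 0 1) :=
      (integrable_const _).sub hi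
    rw [integral_pos_iff_support_of_nonneg hnn hii]
    have : Function.support (fun x : ℝ => 1 - Real.exp (-|x|)) = {0}ᶜ := by
      ext x
      simp [sub_eq_zero, eq_comm (a := (1:ℝ))]
    rw [this]
    have := nullSingletonClass_gaussianReal (μ := 0) (v := 1) one_ne_zero
    rw [prob_compl_eq_one_sub (measurableSet_singleton _), measure_singleton]
    simp
  rw [integral_sub (integrable_const _) hi] at hpos
  simp at hpos
  linarith

/-- Small-ball: a fixed direction. -/
lemma small_ball : ∃ c δ : ℝ, 0 < c ∧ 0 < δ ∧ ∀ (m N : ℕ) (V : Fin N → ℝ),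
    stdGaussianMatrix m N {Φ | ∑ i, |∑ j, Φ i j * V j| < c * m * l2Norm V} ≤
      ENNReal.ofReal (Real.exp (-(δ * m))) := by
  set ρ := ∫ x, Real.exp (-|x|) ∂(gaussianReal 0 1) with hρ
  have hρ1 : ρ < 1 := rho_lt_one
  have hρ0 : 0 < ρ := by
    apply integral_exp_pos
    apply Integrable.mono' (integrable_const (1:ℝ)) (by fun_prop)
    exact Filter.Eventually.of_forall (fun x => by
      rw [Real.norm_eq_abs, abs_of_pos (Real.exp_pos _)]; simp)
  have hl : Real.log ρ < 0 := Real.log_neg hρ0 hρ1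
  refine ⟨-Real.log ρ / 2, -Real.log ρ / 2, by linarith, by linarith, ?_⟩
  intro m N V
  by_cases hV : l2Norm V = 0
  · have : {Φ : Fin m → Fin N → ℝ | ∑ i, |∑ j, Φ i j * V j| < -Real.log ρ / 2 * m * l2Norm V} = ∅ := by
      ext Φ
      simp only [Set.mem_ofPred_eq, Set.mem_empty_iff_false, iff_false, not_lt, hV, mul_zero]
      positivity
    rw [this]; simp
  have hVpos : 0 < l2Norm V := lt_of_le_of_ne (Real.sqrt_nonneg _) (Ne.symm hV)
  set u : Fin N → ℝ := fun j => V j / l2Norm V with hu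
  have hu1 : ∑ j, u j ^ 2 = 1 := by
    simp only [hu, div_pow]
    rw [← Finset.sum_div, div_eq_one_iff_eq (by positivity)]
    exact (Real.sq_sqrt (Finset.sum_nonneg (fun j _ => sq_nonneg _))).symm
  have hlaw := law_unit u hu1
  have hmeas : Measurable (fun g : Fin N → ℝ => ∑ j, g j * u j) := by fun_prop
  have hint : ∫ g, Real.exp (-|∑ j, g j * u j|) ∂(stdGaussianVec N) = ρ := by
    rw [hρ, ← hlaw, integral_map hmeas.aemeasurable (by fun_prop)]
  have hi : Integrable (fun g => Real.exp (-|∑ j, g j * u j|)) (stdGaussianVec N) := by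
    apply Integrable.mono' (integrable_const (1:ℝ))
      (by have : Measurable (fun g : Fin N → ℝ => Real.exp (-|∑ j, g j * u j|)) := by fun_prop
          exact this.aestronglyMeasurable)
    exact Filter.Eventually.of_forall (fun x => by
      rw [Real.norm_eq_abs, abs_of_pos (Real.exp_pos _)]; simp)
  have hch := chernoff_pi (stdGaussianVec N) (fun g => -|∑ j, g j * u j|) hi m
    (-(-Real.log ρ / 2 * m))
  rw [hint] at hch
  refine (measure_mono ?_).trans (hch.trans (ENNReal.ofReal_le_ofReal ?_))
  · intro Φ hΦ
    simp only [Set.mem_ofPred_eq] at hΦ ⊢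
    rw [Finset.sum_neg_distrib, neg_le_neg_iff]
    have : ∀ i, |∑ j, Φ i j * u j| = |∑ j, Φ i j * V j| / l2Norm V := by
      intro i
      rw [← abs_of_pos hVpos, ← abs_div, Finset.sum_div]
      simp only [hu, mul_div_assoc]
    simp only [this]
    rw [← Finset.sum_div, div_le_iff₀ hVpos]
    exact hΦ.le
  · have : ρ ^ m = Real.exp (m * Real.log ρ) := by
      rw [← Real.rpow_natCast, Real.rpow_def_of_pos hρ0, mul_comm]
    rw [this, ← Real.exp_add, Real.exp_le_exp]
    linarith

lemma column_bound : ∃ B : ℝ, 0 < B ∧ ∀ (m N : ℕ) (j : Fin N),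
    stdGaussianMatrix m N {Φ | B * m ≤ ∑ i, Φ i j ^ 2} ≤
      ENNReal.ofReal (Real.exp (-(m : ℝ))) := by
  obtain ⟨a, ha, hia⟩ := IsGaussian.exists_integrable_exp_sq (gaussianReal 0 1)
  set κ := ∫ x, Real.exp (a * x ^ 2) ∂(gaussianReal 0 1) with hκ
  have hia' : Integrable (fun x : ℝ => Real.exp (a * x ^ 2)) (gaussianReal 0 1) := by
    simpa using hia
  have hκ0 : 0 < κ := integral_exp_pos hia'
  have hκ1 : 1 ≤ κ := by
    have := integral_mono (μ := gaussianReal 0 1) (integrable_const (1:ℝ)) hia' (fun x => by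
      simp only [Real.one_le_exp_iff]; positivity)
    simpa using this
  have hl : 0 ≤ Real.log κ := Real.log_nonneg hκ1
  refine ⟨(1 + Real.log κ) / a, by positivity, ?_⟩
  intro m N j
  have hmp := measurePreserving_eval (fun _ : Fin N => gaussianReal 0 1) j
  have hi : Integrable (fun g : Fin N → ℝ => Real.exp (a * g j ^ 2)) (stdGaussianVec N) :=
    hmp.integrable_comp_of_integrable hia'
  have hint : ∫ g : Fin N → ℝ, Real.exp (a * g j ^ 2) ∂(stdGaussianVec N) = κ := by
    rw [hκ, ← hmp.map_eq, integral_map hmp.measurable.aemeasurable (by fun_prop)]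
    rfl
  have hch := chernoff_pi (stdGaussianVec N) (fun g => a * g j ^ 2) hi m
    ((1 + Real.log κ) * m)
  rw [hint] at hch
  refine (measure_mono ?_).trans (hch.trans (ENNReal.ofReal_le_ofReal ?_))
  · intro Φ hΦ
    simp only [Set.mem_ofPred_eq] at hΦ ⊢
    rw [← Finset.mul_sum]
    calc (1 + Real.log κ) * m = a * ((1 + Real.log κ) / a * m) := by field_simp
      _ ≤ _ := by gcongr
  · have : κ ^ m = Real.exp (m * Real.log κ) := by
      rw [← Real.rpow_natCast, Real.rpow_def_of_pos hκ0, mul_comm]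
    rw [this, ← Real.exp_add, Real.exp_le_exp]
    linarith

/-- Greedy approximate Caratheodory (Maurey) lemma. -/
lemma greedy {ι κ : Type*} [Fintype ι] [DecidableEq ι] [Fintype κ] (a : ι → κ → ℝ) (lam : ι → ℝ)
    (hlam : ∀ j, 0 ≤ lam j) (hsum : ∑ j, lam j = 1) (B : ℝ) (hB : ∀ j, ∑ i, a j i ^ 2 ≤ B)
    (k : ℕ) : ∃ n : ι → ℕ, ∑ j, n j = k ∧
      ∑ i, (∑ j, (n j : ℝ) * a j i - k * ∑ j, lam j * a j i) ^ 2 ≤ k * B := by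
  induction k with
  | zero => exact ⟨fun _ => 0, by simp, by simp⟩
  | succ k ih =>
    obtain ⟨n, hn, hE⟩ := ih
    set w : κ → ℝ := fun i => ∑ j, lam j * a j i with hw
    set E : κ → ℝ := fun i => ∑ j, (n j : ℝ) * a j i - k * w i with hEdef
    have havg : ∑ j, lam j * ∑ i, (E i + a j i - w i) ^ 2 ≤ (k + 1) * B := by
      have h1 : ∑ j, lam j * ∑ i, (E i + a j i - w i) ^ 2 =
          ∑ i, ∑ j, lam j * (E i + a j i - w i) ^ 2 := by
        simp_rw [Finset.mul_sum]
        exact Finset.sum_comm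
      have h2 : ∀ i, ∑ j, lam j * (E i + a j i - w i) ^ 2 =
          E i ^ 2 - w i ^ 2 + ∑ j, lam j * a j i ^ 2 := by
        intro i
        have : ∀ j, lam j * (E i + a j i - w i) ^ 2 =
            (E i - w i) ^ 2 * lam j + 2 * (E i - w i) * (lam j * a j i) + lam j * a j i ^ 2 := by
          intro j; ring
        simp_rw [this]
        rw [Finset.sum_add_distrib, Finset.sum_add_distrib, ← Finset.mul_sum, ← Finset.mul_sum,
          hsum]
        change (E i - w i) ^ 2 * 1 + 2 * (E i - w i) * w i + _ = _
        ring
      have h3 : ∑ i, ∑ j, lam j * a j i ^ 2 ≤ B := by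
        rw [Finset.sum_comm]
        calc ∑ j, ∑ i, lam j * a j i ^ 2 = ∑ j, lam j * ∑ i, a j i ^ 2 := by
              simp_rw [Finset.mul_sum]
          _ ≤ ∑ j, lam j * B :=
              Finset.sum_le_sum (fun j _ => mul_le_mul_of_nonneg_left (hB j) (hlam j))
          _ = B := by rw [← Finset.sum_mul, hsum, one_mul]
      rw [h1]
      simp_rw [h2]
      rw [Finset.sum_add_distrib, Finset.sum_sub_distrib]
      have h4 : 0 ≤ ∑ i, w i ^ 2 := Finset.sum_nonneg (fun i _ => sq_nonneg _)
      linarith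
    have hex : ∃ j, ∑ i, (E i + a j i - w i) ^ 2 ≤ (k + 1) * B := by
      by_contra hcon
      push Not at hcon
      have hpos : ∃ j, 0 < lam j := by
        by_contra hc
        push Not at hc
        have : ∑ j, lam j ≤ 0 := Finset.sum_nonpos (fun j _ => hc j)
        linarith
      obtain ⟨j0, hj0⟩ := hpos
      have : ∑ j, lam j * ((k + 1) * B) < ∑ j, lam j * ∑ i, (E i + a j i - w i) ^ 2 :=
        Finset.sum_lt_sum (fun j _ => mul_le_mul_of_nonneg_left (hcon j).le (hlam j))
          ⟨j0, Finset.mem_univ _, mul_lt_mul_of_pos_left (hcon j0) hj0⟩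
      rw [← Finset.sum_mul, hsum, one_mul] at this
      linarith
    obtain ⟨j0, hj0⟩ := hex
    refine ⟨fun j => n j + if j = j0 then 1 else 0, ?_, ?_⟩
    · rw [Finset.sum_add_distrib, hn]; simp
    · push_cast
      refine le_trans (le_of_eq ?_) hj0
      apply Finset.sum_congr rfl
      intro i _
      congr 1
      simp only [add_mul, Finset.sum_add_distrib, ite_mul, one_mul, zero_mul,
        Finset.sum_ite_eq', Finset.mem_univ, if_true, hEdef]
      ring

lemma greedy_signed {N : ℕ} {κ : Type*} [Fintype κ] (a : Fin N → κ → ℝ) (v : Fin N → ℝ)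
    (hv : 0 < l1Norm v) (B : ℝ) (hB : ∀ j, ∑ i, a j i ^ 2 ≤ B) (k : ℕ) :
    ∃ n : Fin N ⊕ Fin N → ℕ, ∑ j, n j = k ∧
      ∑ i, (∑ j, ((n (Sum.inl j) : ℝ) - n (Sum.inr j) - k * (v j / l1Norm v)) * a j i) ^ 2
        ≤ k * B := by
  obtain ⟨n, hn, h⟩ := greedy (ι := Fin N ⊕ Fin N) (Sum.elim a (fun j i => -a j i))
    (Sum.elim (fun j => max (v j) 0 / l1Norm v) (fun j => max (-v j) 0 / l1Norm v))
    (by rintro (j | j) <;> simp only [Sum.elim_inl, Sum.elim_inr] <;> positivity)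
    (by
      rw [Fintype.sum_sum_type]
      simp only [Sum.elim_inl, Sum.elim_inr]
      rw [← Finset.sum_add_distrib]
      simp_rw [← add_div]
      rw [← Finset.sum_div, div_eq_one_iff_eq hv.ne']
      apply Finset.sum_congr rfl
      intro j _
      rcases le_total 0 (v j) with h | h
      · rw [max_eq_left h, max_eq_right (by linarith), abs_of_nonneg h, add_zero]
      · rw [max_eq_right h, max_eq_left (by linarith), abs_of_nonpos h, zero_add])
    B (by rintro (j | j) <;> simpa using hB j) k
  refine ⟨n, hn, le_trans (le_of_eq ?_) h⟩
  apply Finset.sum_congr rfl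
  intro i _
  congr 1
  rw [Fintype.sum_sum_type, Fintype.sum_sum_type]
  simp only [Sum.elim_inl, Sum.elim_inr]
  rw [← Finset.sum_add_distrib, ← Finset.sum_add_distrib, Finset.mul_sum, ← Finset.sum_sub_distrib]
  apply Finset.sum_congr rfl
  intro j _
  have : v j = max (v j) 0 - max (-v j) 0 := by
    rcases le_total 0 (v j) with h | h
    · rw [max_eq_left h, max_eq_right (by linarith), sub_zero]
    · rw [max_eq_right h, max_eq_left (by linarith)]; ring
  conv_lhs => rw [this]
  ring

lemma l2Norm_eq {N : ℕ} (v : Fin N → ℝ) : l2Norm v = ‖WithLp.toLp 2 v‖ := by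
  rw [EuclideanSpace.norm_eq]
  simp [l2Norm]

lemma l2Norm_add_le {N : ℕ} (v w : Fin N → ℝ) : l2Norm (v + w) ≤ l2Norm v + l2Norm w := by
  simp only [l2Norm_eq, WithLp.toLp_add]
  exact norm_add_le _ _

lemma l2Norm_smul {N : ℕ} (r : ℝ) (hr : 0 ≤ r) (v : Fin N → ℝ) :
    l2Norm (fun j => r * v j) = r * l2Norm v := by
  unfold l2Norm
  simp_rw [mul_pow]
  rw [← Finset.mul_sum, Real.sqrt_mul (sq_nonneg r), Real.sqrt_sq hr]

/-- The vector of the net attached to a multiplicity function. -/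
def netVec {N : ℕ} (n : Fin N ⊕ Fin N → ℕ) : Fin N → ℝ :=
  fun j => (n (Sum.inl j) : ℝ) - n (Sum.inr j)

lemma sum_abs_le_sqrt {m : ℕ} (u : Fin m → ℝ) (Q : ℝ) (h : ∑ i, u i ^ 2 ≤ Q) :
    ∑ i, |u i| ≤ Real.sqrt (m * Q) := by
  apply Real.le_sqrt_of_sq_le
  have := sq_sum_le_card_mul_sum_sq (s := (Finset.univ : Finset (Fin m))) (f := fun i => |u i|)
  simp only [sq_abs, Finset.card_univ, Fintype.card_fin] at this
  exact this.trans (by gcongr)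

lemma cone_lower {m N : ℕ} (Φ : Fin m → Fin N → ℝ) (c B : ℝ) (hc : 0 < c) (hB : 0 < B)
    (hm : 0 < m) (k : ℕ) (hcol : ∀ j, ∑ i, Φ i j ^ 2 ≤ B * m)
    (hnet : ∀ n : Fin N ⊕ Fin N → ℕ, ∑ j, n j = k →
      c * m * l2Norm (netVec n) ≤ ∑ i, |∑ j, Φ i j * netVec n j|)
    (v : Fin N → ℝ) (hv : 0 < l1Norm v) :
    m * (c * k * l2Norm v - (c + Real.sqrt B) * Real.sqrt (2 * k) * l1Norm v) ≤
      k * ∑ i, |∑ j, Φ i j * v j| := by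
  have hm' : (0 : ℝ) < m := by exact_mod_cast hm
  have hBm : 0 < B * m := by positivity
  obtain ⟨n, hn, h⟩ := greedy_signed (κ := Fin m ⊕ Fin N)
    (fun j => Sum.elim (fun i => Φ i j / Real.sqrt (B * m)) (fun l => if l = j then 1 else 0))
    v hv 2 (by
      intro j
      rw [Fintype.sum_sum_type]
      simp only [Sum.elim_inl, Sum.elim_inr, div_pow, Real.sq_sqrt hBm.le]
      rw [← Finset.sum_div]
      have : (∑ i, Φ i j ^ 2) / (B * m) ≤ 1 := (div_le_one hBm).2 (hcol j)
      simp only [ite_pow, one_pow, ne_eq, OfNat.ofNat_ne_zero, not_false_eq_true, zero_pow,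
        Finset.sum_ite_eq', Finset.mem_univ, if_true]
      linarith) k
  set d : Fin N → ℝ := fun j => netVec n j - k * (v j / l1Norm v) with hd
  rw [Fintype.sum_sum_type] at h
  simp only [Sum.elim_inl, Sum.elim_inr, mul_ite, mul_one, mul_zero, Finset.sum_ite_eq,
    Finset.mem_univ, if_true] at h
  change ∑ i, (∑ j, d j * (Φ i j / Real.sqrt (B * m))) ^ 2 + ∑ j, d j ^ 2 ≤ _ at h
  have hΦd : ∀ i, (∑ j, d j * (Φ i j / Real.sqrt (B * m))) ^ 2 =
      (∑ j, Φ i j * d j) ^ 2 / (B * m) := by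
    intro i
    have : ∑ j, d j * (Φ i j / Real.sqrt (B * m)) = (∑ j, Φ i j * d j) / Real.sqrt (B * m) := by
      rw [Finset.sum_div]
      apply Finset.sum_congr rfl
      intro j _; ring
    rw [this, div_pow, Real.sq_sqrt hBm.le]
  simp_rw [hΦd] at h
  rw [← Finset.sum_div] at h
  have hn1 : 0 ≤ (∑ i, (∑ j, Φ i j * d j) ^ 2) / (B * m) := by positivity
  have hn2 : 0 ≤ ∑ j, d j ^ 2 := by positivity
  have hd2 : l2Norm d ≤ Real.sqrt (2 * k) := Real.sqrt_le_sqrt (by linarith)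
  have hPd : ∑ i, (∑ j, Φ i j * d j) ^ 2 ≤ (2 * k) * (B * m) := by
    rw [← div_le_iff₀ hBm]; linarith
  have hPd1 : ∑ i, |∑ j, Φ i j * d j| ≤ m * Real.sqrt B * Real.sqrt (2 * k) := by
    refine (sum_abs_le_sqrt _ _ hPd).trans (le_of_eq ?_)
    have : (m : ℝ) * (2 * k * (B * m)) = m ^ 2 * (B * (2 * k)) := by ring
    rw [this, Real.sqrt_mul (sq_nonneg _), Real.sqrt_sq hm'.le, Real.sqrt_mul hB.le]
    ring
  -- triangle inequalities
  have hV1 : k / l1Norm v * l2Norm v ≤ l2Norm (netVec n) + l2Norm d := by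
    have e1 : (fun j => (k / l1Norm v) * v j) = netVec n + fun j => (-1 : ℝ) * d j := by
      ext j; simp only [Pi.add_apply, hd]; ring
    rw [← l2Norm_smul _ (by positivity), e1]
    refine (l2Norm_add_le _ _).trans (le_of_eq ?_)
    congr 1
    unfold l2Norm
    simp
  have hV2 : ∑ i, |∑ j, Φ i j * netVec n j| ≤
      k / l1Norm v * ∑ i, |∑ j, Φ i j * v j| + ∑ i, |∑ j, Φ i j * d j| := by
    rw [Finset.mul_sum, ← Finset.sum_add_distrib]
    apply Finset.sum_le_sum
    intro i _
    have : ∑ j, Φ i j * netVec n j = k / l1Norm v * ∑ j, Φ i j * v j + ∑ j, Φ i j * d j := by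
      rw [Finset.mul_sum, ← Finset.sum_add_distrib]
      apply Finset.sum_congr rfl
      intro j _
      simp only [hd]; ring
    rw [this]
    refine (abs_add_le _ _).trans (le_of_eq ?_)
    rw [abs_mul, abs_of_nonneg (by positivity : 0 ≤ k / l1Norm v)]
  have hN := hnet n hn
  have hcm : 0 < c * m := by positivity
  have h5 : c * m * (k / l1Norm v * l2Norm v - Real.sqrt (2 * k)) ≤
      k / l1Norm v * ∑ i, |∑ j, Φ i j * v j| + m * Real.sqrt B * Real.sqrt (2 * k) := by
    have : c * m * (k / l1Norm v * l2Norm v - Real.sqrt (2 * k)) ≤ c * m * l2Norm (netVec n) :=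
      mul_le_mul_of_nonneg_left (by linarith) hcm.le
    linarith
  have h6 := mul_le_mul_of_nonneg_left h5 hv.le
  have e2 : l1Norm v * (c * m * (k / l1Norm v * l2Norm v - Real.sqrt (2 * k))) =
      c * m * (k * l2Norm v - l1Norm v * Real.sqrt (2 * k)) := by
    field_simp
  have e3 : l1Norm v * (k / l1Norm v * ∑ i, |∑ j, Φ i j * v j| +
      m * Real.sqrt B * Real.sqrt (2 * k)) = k * ∑ i, |∑ j, Φ i j * v j| +
      m * Real.sqrt B * Real.sqrt (2 * k) * l1Norm v := by
    field_simp
  rw [e2, e3] at h6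
  linarith

lemma cone_lower' {m N s A : ℕ} (Φ : Fin m → Fin N → ℝ) (c B : ℝ) (hc : 0 < c) (hB : 0 < B)
    (hm : 0 < m) (hs : 0 < s) (hA0 : 0 < A)
    (hA : 128 * ((c + Real.sqrt B) / c) ^ 2 ≤ A)
    (hcol : ∀ j, ∑ i, Φ i j ^ 2 ≤ B * m)
    (hnet : ∀ n : Fin N ⊕ Fin N → ℕ, ∑ j, n j = A * s →
      c * m * l2Norm (netVec n) ≤ ∑ i, |∑ j, Φ i j * netVec n j|)
    (v : Fin N → ℝ) (hcone : l1Norm v ≤ 4 * Real.sqrt s * l2Norm v) :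
    c / 2 * m * l2Norm v ≤ ∑ i, |∑ j, Φ i j * v j| := by
  have hm' : (0 : ℝ) < m := by exact_mod_cast hm
  have hs' : (0 : ℝ) < s := by exact_mod_cast hs
  have hA' : (0 : ℝ) < A := by exact_mod_cast hA0
  have hl1 : 0 ≤ l1Norm v := Finset.sum_nonneg (fun j _ => abs_nonneg _)
  have hl2 : 0 ≤ l2Norm v := Real.sqrt_nonneg _
  rcases hl1.eq_or_lt with h0 | hv
  · have : ∀ j, v j = 0 := by
      intro j
      have := (Finset.sum_eq_zero_iff_of_nonneg (fun j _ => abs_nonneg (v j))).1 h0.symm j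
        (Finset.mem_univ j)
      simpa using this
    have : l2Norm v = 0 := by simp [l2Norm, this]
    rw [this, mul_zero]
    positivity
  have h := cone_lower Φ c B hc hB hm (A * s) hcol hnet v hv
  set r := (c + Real.sqrt B) / c with hr
  have hrpos : 0 < r := by positivity
  have hcr : c + Real.sqrt B = c * r := by rw [hr]; field_simp
  rw [hcr] at h
  push_cast at h
  have hsq : 8 * r * Real.sqrt (2 * A) ≤ A := by
    have h1 : 8 * r * Real.sqrt (2 * A) = Real.sqrt ((8 * r) ^ 2 * (2 * A)) := by
      rw [Real.sqrt_mul (sq_nonneg _), Real.sqrt_sq (by positivity)]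
    rw [h1]
    apply Real.sqrt_le_iff.2 ⟨hA'.le, ?_⟩
    nlinarith
  have h2 : Real.sqrt (2 * (A * s)) = Real.sqrt (2 * A) * Real.sqrt s := by
    rw [← Real.sqrt_mul (by positivity)]; ring_nf
  rw [h2] at h
  have hss : Real.sqrt s * Real.sqrt s = s := Real.mul_self_sqrt hs'.le
  have h3 : c * r * (Real.sqrt (2 * A) * Real.sqrt s) * l1Norm v ≤
      c / 2 * (A * s) * l2Norm v := by
    calc c * r * (Real.sqrt (2 * A) * Real.sqrt s) * l1Norm v
        ≤ c * r * (Real.sqrt (2 * A) * Real.sqrt s) * (4 * Real.sqrt s * l2Norm v) := by gcongr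
      _ = c / 2 * (8 * r * Real.sqrt (2 * A)) * (Real.sqrt s * Real.sqrt s) * l2Norm v := by ring
      _ ≤ c / 2 * A * (Real.sqrt s * Real.sqrt s) * l2Norm v := by gcongr
      _ = _ := by rw [hss]; ring
  have hAs : 0 < (A : ℝ) * s := by positivity
  have h4 : (A * s : ℝ) * (c / 2 * m * l2Norm v) ≤ (A * s : ℝ) * ∑ i, |∑ j, Φ i j * v j| := by
    refine le_trans ?_ h
    have := mul_le_mul_of_nonneg_left h3 hm'.le
    linarith
  exact le_of_mul_le_mul_left h4 hAs

lemma sum_abs_le_lpNorm {m : ℕ} (hm : 0 < m) (p : ℝ) (hp : 1 ≤ p) (u : Fin m → ℝ) :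
    ∑ i, |u i| ≤ m / (m : ℝ) ^ (1 / p) * lpNorm p u := by
  have hm' : (0 : ℝ) < m := by exact_mod_cast hm
  have hp0 : 0 < p := by linarith
  have h := Real.rpow_sum_le_const_mul_sum_rpow (Finset.univ : Finset (Fin m)) u hp
  simp only [Finset.card_univ, Fintype.card_fin] at h
  have hS : 0 ≤ ∑ i, |u i| := Finset.sum_nonneg (fun i _ => abs_nonneg _)
  have hS2 : 0 ≤ ∑ i, |u i| ^ p := Finset.sum_nonneg (fun i _ => by positivity)
  have h2 := Real.rpow_le_rpow (by positivity) h (by positivity : 0 ≤ 1 / p)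
  rw [← Real.rpow_mul hS, mul_one_div_cancel hp0.ne', Real.rpow_one,
    Real.mul_rpow (by positivity) hS2, ← Real.rpow_mul hm'.le] at h2
  have : (p - 1) * (1 / p) = 1 - 1 / p := by field_simp
  rw [this, Real.rpow_sub hm', Real.rpow_one] at h2
  exact h2

/-- Deterministic recovery from the cone lower bound. -/
lemma recovery {m N s : ℕ} (hm : 0 < m) (hs : 0 < s) (p : ℝ) (hp : 1 ≤ p)
    (Φ : Fin m → Fin N → ℝ) (c : ℝ) (hc : 0 < c)
    (hcone : ∀ v : Fin N → ℝ, l1Norm v ≤ 4 * Real.sqrt s * l2Norm v →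
      c * m * l2Norm v ≤ ∑ i, |∑ j, Φ i j * v j|)
    (xnat : Fin N → ℝ) (ε : ℝ) (hε : 0 ≤ ε) (e : Fin m → ℝ) (he : lpNorm p e ≤ ε)
    (xstar : Fin N → ℝ)
    (h1 : lpNorm p (fun i => (∑ j, Φ i j * xstar j) - ((∑ j, Φ i j * xnat j) + e i)) ≤ ε)
    (h2 : ∀ x : Fin N → ℝ,
      lpNorm p (fun i => (∑ j, Φ i j * x j) - ((∑ j, Φ i j * xnat j) + e i)) ≤ ε →
        l1Norm xstar ≤ l1Norm x) :
    l2Norm (xstar - xnat) ≤ (1 / Real.sqrt s) * bestApproxL1 s xnat +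
      ((2 / c) / (m : ℝ) ^ (1 / p)) * ε := by
  have hm' : (0 : ℝ) < m := by exact_mod_cast hm
  have hs' : (0 : ℝ) < s := by exact_mod_cast hs
  have hrs : 0 < Real.sqrt s := Real.sqrt_pos.2 hs'
  have hmin : l1Norm xstar ≤ l1Norm xnat := by
    apply h2
    have : (fun i => (∑ j, Φ i j * xnat j) - ((∑ j, Φ i j * xnat j) + e i)) = fun i => - e i := by
      ext i; ring
    rw [this]
    simpa [_root_.lpNorm] using he
  set h : Fin N → ℝ := xstar - xnat with hh
  have hl2 : 0 ≤ l2Norm h := Real.sqrt_nonneg _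
  -- l1 bound
  have hl1 : ∀ z : {z : Fin N → ℝ // {j | z j ≠ 0}.ncard ≤ s},
      (l1Norm h - 2 * Real.sqrt s * l2Norm h) / 2 ≤ l1Norm (xnat - (z : Fin N → ℝ)) := by
    rintro ⟨z, hz⟩
    simp only
    classical
    set S : Finset (Fin N) := Finset.univ.filter (fun j => z j ≠ 0) with hS
    have hScard : S.card ≤ s := by
      have : ({j | z j ≠ 0} : Set (Fin N)) = (S : Set (Fin N)) := by ext j; simp [hS]
      rw [this, Set.ncard_coe_finset] at hz
      exact hz
    have hpt : ∀ j, |h j| + |xnat j| - |xstar j| ≤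
        2 * (if j ∈ S then |h j| else 0) + 2 * |xnat j - z j| := by
      intro j
      have hhj : h j = xstar j - xnat j := rfl
      by_cases hj : j ∈ S
      · rw [if_pos hj]
        have a1 : |xnat j| ≤ |xstar j| + |h j| := by
          have := abs_sub_abs_le_abs_sub (xnat j) (xstar j)
          rw [abs_sub_comm, ← hhj] at this; linarith
        have := abs_nonneg (xnat j - z j)
        linarith
      · rw [if_neg hj]
        have hzj : z j = 0 := by simpa [hS] using hj
        rw [hzj, sub_zero, hhj]
        have := abs_sub (xstar j) (xnat j)
        linarith
    have hsum := Finset.sum_le_sum (fun j (_ : j ∈ (Finset.univ : Finset (Fin N))) => hpt j)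
    rw [Finset.sum_sub_distrib, Finset.sum_add_distrib, Finset.sum_add_distrib,
      ← Finset.mul_sum, ← Finset.mul_sum, Finset.sum_ite_mem, Finset.univ_inter] at hsum
    have hCS : ∑ j ∈ S, |h j| ≤ Real.sqrt s * l2Norm h := by
      unfold l2Norm
      rw [← Real.sqrt_mul hs'.le]
      apply Real.le_sqrt_of_sq_le
      have := sq_sum_le_card_mul_sum_sq (s := S) (f := fun i => |h i|)
      simp only [sq_abs] at this
      refine this.trans ?_
      have b1 : (S.card : ℝ) ≤ s := by exact_mod_cast hScard
      have b2 : ∑ i ∈ S, h i ^ 2 ≤ ∑ i, h i ^ 2 :=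
        Finset.sum_le_sum_of_subset_of_nonneg (Finset.subset_univ _) (fun _ _ _ => sq_nonneg _)
      have b3 : 0 ≤ ∑ i ∈ S, h i ^ 2 := Finset.sum_nonneg (fun _ _ => sq_nonneg _)
      gcongr
    have e1 : l1Norm h = ∑ j, |h j| := rfl
    have e2 : l1Norm xnat = ∑ j, |xnat j| := rfl
    have e3 : l1Norm xstar = ∑ j, |xstar j| := rfl
    have e4 : l1Norm (xnat - z) = ∑ j, |xnat j - z j| := rfl
    rw [← e1, ← e2, ← e3, ← e4] at hsum
    linarith
  have hne : Nonempty {z : Fin N → ℝ // {j | z j ≠ 0}.ncard ≤ s} := ⟨⟨0, by simp⟩⟩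
  have hσ : (l1Norm h - 2 * Real.sqrt s * l2Norm h) / 2 ≤ bestApproxL1 s xnat := le_ciInf hl1
  have hσ0 : 0 ≤ bestApproxL1 s xnat :=
    Real.iInf_nonneg (fun z => Finset.sum_nonneg (fun j _ => abs_nonneg _))
  have hmp : 0 < (m : ℝ) ^ (1 / p) := by positivity
  by_cases hcase : Real.sqrt s * l2Norm h ≤ bestApproxL1 s xnat
  · have : l2Norm h ≤ 1 / Real.sqrt s * bestApproxL1 s xnat := by
      rw [one_div, inv_mul_eq_div, le_div_iff₀ hrs, mul_comm]; exact hcase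
    have : 0 ≤ ((2 / c) / (m : ℝ) ^ (1 / p)) * ε := by positivity
    linarith
  · push Not at hcase
    have hlow := hcone h (by linarith)
    have hup := sum_abs_le_lpNorm hm p hp (fun i => ∑ j, Φ i j * h j)
    have hmink : lpNorm p (fun i => ∑ j, Φ i j * h j) ≤ 2 * ε := by
      have := Real.Lp_add_le (Finset.univ : Finset (Fin m))
        (fun i => (∑ j, Φ i j * xstar j) - ((∑ j, Φ i j * xnat j) + e i)) e hp
      have e5 : (fun i => ∑ j, Φ i j * h j) =
          fun i => (∑ j, Φ i j * xstar j) - ((∑ j, Φ i j * xnat j) + e i) + e i := by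
        ext i
        have : ∑ j, Φ i j * h j = ∑ j, Φ i j * xstar j - ∑ j, Φ i j * xnat j := by
          rw [← Finset.sum_sub_distrib]
          apply Finset.sum_congr rfl
          intro j _
          simp only [hh, Pi.sub_apply]; ring
        rw [this]; ring
      rw [e5]
      refine le_trans this ?_
      change lpNorm p _ + lpNorm p _ ≤ _
      linarith
    have h7 : c * m * l2Norm h ≤ m / (m : ℝ) ^ (1 / p) * (2 * ε) :=
      hlow.trans (hup.trans (mul_le_mul_of_nonneg_left hmink (by positivity)))
    have h8 : l2Norm h ≤ ((2 / c) / (m : ℝ) ^ (1 / p)) * ε := by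
      have hcm : 0 < c * m := by positivity
      apply le_of_mul_le_mul_left _ hcm
      refine h7.trans (le_of_eq ?_)
      field_simp
    have : 0 ≤ 1 / Real.sqrt s * bestApproxL1 s xnat := by positivity
    linarith

/-- Size of the net. -/
lemma net_card (N s k : ℕ) (hs : 0 < s) (hsN : s ≤ N) :
    ((Finset.piAntidiag (Finset.univ : Finset (Fin N ⊕ Fin N)) k).card : ℝ) ≤
      Real.exp (k * Real.log (Real.exp 1 * N / s) + 2 * s) := by
  have hs' : (0 : ℝ) < s := by exact_mod_cast hs
  have hN' : (0 : ℝ) < N := by exact_mod_cast (lt_of_lt_of_le hs hsN)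
  have hsN' : (s : ℝ) ≤ N := by exact_mod_cast hsN
  set L := Real.log (Real.exp 1 * N / s) with hL
  set x : ℝ := Real.exp (-L) with hx
  have hx0 : 0 < x := Real.exp_pos _
  have hxeq : x = s / (Real.exp 1 * N) := by
    rw [hx, Real.exp_neg, hL, Real.exp_log (by positivity), inv_div]
  have he : 2 < Real.exp 1 := by have := Real.exp_one_gt_d9; linarith
  have hxN : x * N ≤ s / 2 := by
    rw [hxeq]
    have : s / (Real.exp 1 * N) * N = s / Real.exp 1 := by field_simp
    rw [this]
    gcongr
  have hx2 : x ≤ 1 / 2 := by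
    have : x * N ≤ 1 / 2 * N := by linarith
    exact le_of_mul_le_mul_right this hN'
  have hgeom : ∑ i ∈ Finset.range (k + 1), x ^ i ≤ Real.exp (2 * x) := by
    have h1 : (∑ i ∈ Finset.range (k + 1), x ^ i) * (1 - x) = 1 - x ^ (k + 1) := geom_sum_mul_neg x (k+1)
    have h2 : 0 < x ^ (k + 1) := by positivity
    have h3 : 1 + 2 * x ≤ Real.exp (2 * x) := by have := Real.add_one_le_exp (2 * x); linarith
    have h4 : (0:ℝ) < 1 - x := by linarith
    refine le_trans ?_ h3
    apply le_of_mul_le_mul_right _ h4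
    nlinarith
  have hcard : ((Finset.piAntidiag (Finset.univ : Finset (Fin N ⊕ Fin N)) k).card : ℝ) * x ^ k ≤
      Real.exp (2 * x) ^ (2 * N) := by
    calc ((Finset.piAntidiag (Finset.univ : Finset (Fin N ⊕ Fin N)) k).card : ℝ) * x ^ k
        = ∑ n ∈ Finset.piAntidiag (Finset.univ : Finset (Fin N ⊕ Fin N)) k, ∏ j, x ^ (n j) := by
          rw [← nsmul_eq_mul, ← Finset.sum_const]
          apply Finset.sum_congr rfl
          intro n hn
          rw [Finset.mem_piAntidiag] at hn
          rw [Finset.prod_pow_eq_pow_sum, hn.1]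
      _ ≤ ∑ n ∈ Fintype.piFinset (fun _ : Fin N ⊕ Fin N => Finset.range (k + 1)),
            ∏ j, x ^ (n j) := by
          apply Finset.sum_le_sum_of_subset_of_nonneg
          · intro n hn
            rw [Finset.mem_piAntidiag] at hn
            rw [Fintype.mem_piFinset]
            intro j
            rw [Finset.mem_range, Nat.lt_succ_iff, ← hn.1]
            exact Finset.single_le_sum (fun i _ => Nat.zero_le (n i)) (Finset.mem_univ j)
          · intro n _ _; positivity
      _ = ∏ j : Fin N ⊕ Fin N, ∑ i ∈ Finset.range (k + 1), x ^ i :=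
          (Finset.prod_univ_sum _ _).symm
      _ = (∑ i ∈ Finset.range (k + 1), x ^ i) ^ (2 * N) := by
          rw [Finset.prod_const, Finset.card_univ, Fintype.card_sum, Fintype.card_fin, two_mul]
      _ ≤ _ := by gcongr
  have hxk : x ^ k = Real.exp (-(k * L)) := by
    rw [hx, ← Real.exp_nat_mul]; ring_nf
  rw [hxk, ← Real.exp_nat_mul, Real.exp_neg, ← div_eq_mul_inv, div_le_iff₀ (Real.exp_pos _),
    ← Real.exp_add] at hcard
  refine hcard.trans (Real.exp_le_exp.2 ?_)
  push_cast
  linarith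

lemma log_le_slog (N s : ℕ) (hs : 0 < s) (hsN : s ≤ N) :
    Real.log N ≤ s * Real.log (Real.exp 1 * N / s) ∧ (s : ℝ) ≤ s * Real.log (Real.exp 1 * N / s) := by
  have hs' : (1 : ℝ) ≤ s := by exact_mod_cast hs
  have hs0 : (0 : ℝ) < s := by linarith
  have hsN' : (s : ℝ) ≤ N := by exact_mod_cast hsN
  have hN' : (0 : ℝ) < N := by linarith
  have hlog : Real.log (Real.exp 1 * N / s) = 1 + Real.log N - Real.log s := by
    rw [Real.log_div (by positivity) (by positivity), Real.log_mul (by positivity) (by positivity),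
      Real.log_exp]
  have hmono : Real.log s ≤ Real.log N := Real.log_le_log hs0 hsN'
  have hls : Real.log s ≤ s - 1 := Real.log_le_sub_one_of_pos hs0
  rw [hlog]
  constructor <;> nlinarith

/-- Corollary 1: stable and robust recovery for ℓp-constrained compressive sensing
with standard Gaussian matrices, with the optimal number of measurements
m ≳ s log(eN/s) + log(2η⁻¹). -/
theorem gaussian_recovery :
    ∀ p : ℝ, 1 ≤ p →
      ∃ C D C' D' : ℝ, 0 < C ∧ 0 < D ∧ 0 < C' ∧ 0 < D' ∧
        ∀ η : ℝ, 0 < η → η < 1 →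
          ∀ (s N m : ℕ), 0 < s → s ≤ N → 0 < m →
            C * s * Real.log (Real.exp 1 * N / s) + D * Real.log (2 * η⁻¹) ≤ m →
            ENNReal.ofReal (1 - η) ≤
              stdGaussianMatrix m N
                {Φ : Fin m → Fin N → ℝ |
                  ∀ (xnat : Fin N → ℝ) (ε : ℝ), 0 ≤ ε →
                    ∀ e : Fin m → ℝ, lpNorm p e ≤ ε →
                      ∀ xstar : Fin N → ℝ,
                        lpNorm p (fun i => (∑ j, Φ i j * xstar j) -
                          ((∑ j, Φ i j * xnat j) + e i)) ≤ ε →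
                        (∀ x : Fin N → ℝ,
                          lpNorm p (fun i => (∑ j, Φ i j * x j) -
                            ((∑ j, Φ i j * xnat j) + e i)) ≤ ε →
                          l1Norm xstar ≤ l1Norm x) →
                        l2Norm (xstar - xnat) ≤
                          (C' / Real.sqrt s) * bestApproxL1 s xnat +
                            (D' / (m : ℝ) ^ (1 / p)) * ε} := by
  obtain ⟨c, δ, hc, hδ, hsb⟩ := small_ball
  obtain ⟨B, hB, hcb⟩ := column_bound
  intro p hp
  obtain ⟨A, hA⟩ := exists_nat_ge (max 1 (128 * ((c + Real.sqrt B) / c) ^ 2))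
  have hA1 : (1 : ℝ) ≤ A := (le_max_left _ _).trans hA
  have hA2 : 128 * ((c + Real.sqrt B) / c) ^ 2 ≤ A := (le_max_right _ _).trans hA
  have hA0 : 0 < A := by exact_mod_cast (lt_of_lt_of_le one_pos hA1)
  refine ⟨(A + 2) / δ + 1, 1 / δ + 1, 1, 2 / (c / 2), by positivity, by positivity, one_pos,
    by positivity, ?_⟩
  intro η hη hη1 s N m hs hsN hm hmge
  have hm' : (0 : ℝ) < m := by exact_mod_cast hm
  have hs' : (0 : ℝ) < s := by exact_mod_cast hs
  have hN' : (0 : ℝ) < N := by exact_mod_cast (lt_of_lt_of_le hs hsN)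
  obtain ⟨hL1, hL2⟩ := log_le_slog N s hs hsN
  set L := Real.log (Real.exp 1 * N / s) with hL
  set ℓ := Real.log (2 * η⁻¹) with hℓ
  have hℓ0 : 0 ≤ ℓ := by
    apply Real.log_nonneg
    have : 1 ≤ η⁻¹ := (one_le_inv₀ hη).2 hη1.le
    linarith
  have hexpℓ : Real.exp (-ℓ) = η / 2 := by
    rw [Real.exp_neg, hℓ, Real.exp_log (by positivity), mul_inv, inv_inv]; ring
  have hsL : 0 < s * L := lt_of_lt_of_le hs' hL2
  have hb1 : s * L + ℓ ≤ m := by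
    have : 0 ≤ (A + 2) / δ * (s * L) := by positivity
    have : 0 ≤ 1 / δ * ℓ := by positivity
    linarith
  have hb2 : (A + 2) * (s * L) + ℓ ≤ δ * m := by
    have h1 : (A + 2) / δ * (s * L) + 1 / δ * ℓ ≤ m := by linarith
    have h2 := mul_le_mul_of_nonneg_left h1 hδ.le
    have h3 : δ * ((A + 2) / δ * (s * L) + 1 / δ * ℓ) = (A + 2) * (s * L) + ℓ := by
      field_simp
    linarith
  set net := Finset.piAntidiag (Finset.univ : Finset (Fin N ⊕ Fin N)) (A * s) with hnet
  set bad1 : Set (Fin m → Fin N → ℝ) := ⋃ j : Fin N, {Φ | B * m ≤ ∑ i, Φ i j ^ 2} with hbad1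
  set bad2 : Set (Fin m → Fin N → ℝ) :=
    ⋃ n ∈ net, {Φ | ∑ i, |∑ j, Φ i j * netVec n j| < c * m * l2Norm (netVec n)} with hbad2
  have hm1 : stdGaussianMatrix m N bad1 ≤ ENNReal.ofReal (η / 2) := by
    refine (measure_iUnion_fintype_le _ _).trans ?_
    refine (Finset.sum_le_sum (fun j _ => hcb m N j)).trans ?_
    rw [Finset.sum_const, Finset.card_univ, Fintype.card_fin, nsmul_eq_mul,
      ← ENNReal.ofReal_natCast, ← ENNReal.ofReal_mul (by positivity)]
    apply ENNReal.ofReal_le_ofReal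
    rw [← hexpℓ]
    calc (N : ℝ) * Real.exp (-(m : ℝ)) = Real.exp (Real.log N + -(m : ℝ)) := by
          rw [Real.exp_add, Real.exp_log hN']
      _ ≤ _ := Real.exp_le_exp.2 (by linarith)
  have hm2 : stdGaussianMatrix m N bad2 ≤ ENNReal.ofReal (η / 2) := by
    refine (measure_biUnion_finset_le _ _).trans ?_
    refine (Finset.sum_le_sum (fun n _ => hsb m N (netVec n))).trans ?_
    rw [Finset.sum_const, nsmul_eq_mul,
      ← ENNReal.ofReal_natCast, ← ENNReal.ofReal_mul (by positivity)]
    apply ENNReal.ofReal_le_ofReal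
    rw [← hexpℓ]
    have hcard := net_card N s (A * s) hs hsN
    refine (mul_le_mul_of_nonneg_right hcard (Real.exp_pos _).le).trans ?_
    rw [← Real.exp_add, Real.exp_le_exp]
    push_cast
    linarith
  set T := {Φ : Fin m → Fin N → ℝ |
                  ∀ (xnat : Fin N → ℝ) (ε : ℝ), 0 ≤ ε →
                    ∀ e : Fin m → ℝ, lpNorm p e ≤ ε →
                      ∀ xstar : Fin N → ℝ,
                        lpNorm p (fun i => (∑ j, Φ i j * xstar j) -
                          ((∑ j, Φ i j * xnat j) + e i)) ≤ ε →
                        (∀ x : Fin N → ℝ,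
                          lpNorm p (fun i => (∑ j, Φ i j * x j) -
                            ((∑ j, Φ i j * xnat j) + e i)) ≤ ε →
                          l1Norm xstar ≤ l1Norm x) →
                        l2Norm (xstar - xnat) ≤
                          (1 / Real.sqrt s) * bestApproxL1 s xnat +
                            ((2 / (c / 2)) / (m : ℝ) ^ (1 / p)) * ε} with hT
  have hcover : Set.univ ⊆ T ∪ (bad1 ∪ bad2) := by
    intro Φ _
    by_cases hb : Φ ∈ bad1 ∪ bad2
    · exact Or.inr hb
    · left
      simp only [Set.mem_union, not_or, hbad1, hbad2, Set.mem_iUnion, not_exists,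
        Set.mem_ofPred_eq, not_le, not_lt] at hb
      obtain ⟨g1, g2⟩ := hb
      intro xnat ε hε e he xstar h1 h2
      refine recovery hm hs p hp Φ (c / 2) (by positivity) ?_ xnat ε hε e he xstar h1 h2
      intro v hv
      exact cone_lower' Φ c B hc hB hm hs hA0 hA2 (fun j => (g1 j).le)
        (fun n hn => g2 n (by rw [hnet, Finset.mem_piAntidiag]; exact ⟨hn, fun i _ => Finset.mem_univ i⟩))
        v hv
  have hone : (1 : ENNReal) ≤ stdGaussianMatrix m N T + ENNReal.ofReal η := by
    calc (1 : ENNReal) = stdGaussianMatrix m N Set.univ := measure_univ.symm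
      _ ≤ stdGaussianMatrix m N (T ∪ (bad1 ∪ bad2)) := measure_mono hcover
      _ ≤ stdGaussianMatrix m N T + (stdGaussianMatrix m N bad1 + stdGaussianMatrix m N bad2) :=
          (measure_union_le _ _).trans (by gcongr; exact measure_union_le _ _)
      _ ≤ stdGaussianMatrix m N T + (ENNReal.ofReal (η / 2) + ENNReal.ofReal (η / 2)) := by
          gcongr
      _ = _ := by rw [← ENNReal.ofReal_add (by positivity) (by positivity), add_halves]
  rw [ENNReal.ofReal_sub _ hη.le, ENNReal.ofReal_one]
  exact tsub_le_iff_right.2 hone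
end
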